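/- Kolmogorov-type moment bound via Young's inequality: Let d be a positive integer, σ>0, n∈2ℕ₊ (an even positive integer) and m∈ℕ. For μ∈(0,1] write [μ]:=μ^{1/σ} and let K̃_μ be the fundamental solution of (1−[μ]²Δ)^{d+2} on ℝ^d, i.e. the nonnegative integrable function with ∫K̃_μ=1 whose Fourier transform equals ξ↦(1+[μ]²|ξ|²)^{−(d+2)}. There exists a constant C>0 such that for every probability space (Ω,𝔽,ℙ), every jointly measurable bounded random field ζ:Ω×ℝ^d×(ℝ^d)^m→ℝ which is 2π-periodic in each coordinate of the first ℝ^d variable, and every μ∈(0,1]: 𝔼‖K̃_μ^{⊗(1+m)}∗ζ‖_{L^∞(ℝ^{d(1+m)})}^n ≤ C·[μ]^{−d(1+m)}·𝔼‖ζ‖_{L^n(𝕋×(ℝ^d)^m)}^n, where K̃_μ^{⊗(1+m)}∗ζ denotes the convolution of ζ with K̃_μ in each of its 1+m ℝ^d-variables, and the L^n norm is taken with the first variable integrated over a fundamental domain [−π,π)^d of the torus 𝕋=(ℝ/2πℤ)^d and the remaining variables over (ℝ^d)^m (both sides may be infinite). -/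

import Mathlib

/-!
Write `l = [μ] ∈ (0,1]`. Since `K̃_μ^{⊗(1+m)}` is a probability density, Jensen's inequality gives
`|K̃_μ^{⊗(1+m)} ∗ ζ|^n ≤ K̃_μ^{⊗(1+m)} ∗ |ζ|^n` pointwise (`jensen`). So it suffices to bound the
right-hand side by the integral of `|ζ|^n` over one period, which follows from the pointwise bound
`K̃_μ(x) ≤ A l^{-d} ∏ᵢ (1 + xᵢ²)⁻¹`: in the last `m` variables the product weight is bounded by `1`,
and in the first one it is integrated against a periodic function.

* The decay bound (`bessel_le`) comes from the representation of `K̃_μ` as a `Gamma(d+2)`-mixture of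
  heat kernels at times `s l²` (`bessel`). The mixture has the prescribed Fourier transform
  (`ft_bessel`), and Fourier uniqueness for finite measures (`ae_eq_of_ft_eq`) identifies it with
  `K̃_μ` almost everywhere, which is enough under convolution integrals.
* For the periodic variable (`weighted_periodic`) no lattice sum is needed: the weight is slowly
  varying, so it may be averaged over translates by the fundamental domain. By Tonelli this moves the
  average onto the periodic function and turns it into its mean, uniformly in the base point; the
  weight then contributes only its finite total integral.

The pointwise bound `conv_bound` is uniform in the evaluation point and is integrated over `Ω`.
-/

open MeasureTheory
open scoped ENNReal

noncomputable section

/-- Points of `ℝ^d`. -/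
abbrev Vd (d : ℕ) := Fin d → ℝ

/-- The Fourier transform with the convention `𝓕f(ξ) = ∫ f(x) e^{-i⟨x,ξ⟩} dx`. -/
def ft (d : ℕ) (f : Vd d → ℝ) (ξ : Vd d) : ℂ :=
  ∫ x : Vd d, Complex.exp (-Complex.I * (∑ i, (x i : ℂ) * (ξ i : ℂ))) * (f x : ℂ)

/-- The family `μ ↦ K̃_μ` of fundamental solutions of `(1 - [μ]²Δ)^{d+2}`, `[μ] = μ^{1/σ}`. -/
def IsBessel (d : ℕ) (σ : ℝ) (K : ℝ → Vd d → ℝ) : Prop :=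
  ∀ μ ∈ Set.Ioc (0 : ℝ) 1,
    (∀ x, 0 ≤ K μ x) ∧ Integrable (K μ) ∧ (∫ x, K μ x) = 1 ∧
    ∀ ξ : Vd d,
      ft d (K μ) ξ
        = (((1 + (μ ^ (1 / σ)) ^ 2 * ∑ i, ξ i ^ 2) ^ (d + 2) : ℝ) : ℂ)⁻¹

/-- A fundamental domain `[-π,π)^d` of the torus `(ℝ/2πℤ)^d`. -/
def fundDom (d : ℕ) : Set (Vd d) := Set.univ.pi fun _ : Fin d => Set.Ico (-Real.pi) Real.pi

/-- The convolution `K̃_μ^{⊗(1+m)} ∗ ζ` of a field `ζ` on `ℝ^d × (ℝ^d)^m` with the kernel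
`K` in each of its `1+m` `ℝ^d`-variables. -/
def convField (d m : ℕ) (K : Vd d → ℝ) (ζ : Vd d → (Fin m → Vd d) → ℝ)
    (q : Vd d × (Fin m → Vd d)) : ℝ :=
  ∫ p : Vd d × (Fin m → Vd d),
    K (q.1 - p.1) * (∏ j, K (q.2 j - p.2 j)) * ζ p.1 p.2

/-! ### Heat kernels and their Fourier transforms -/

/-- The heat kernel on `ℝ^d` at time `t`. -/
def heat (d : ℕ) (t : ℝ) (x : Vd d) : ℝ :=
  ((√(4 * Real.pi * t)) ^ d)⁻¹ * Real.exp (-(1 / (4 * t)) * ∑ i, x i ^ 2)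

lemma heat_nonneg (d : ℕ) (t : ℝ) (x : Vd d) : 0 ≤ heat d t x := by
  unfold heat; positivity

lemma ofReal_cpow_half (y : ℝ) (hy : 0 ≤ y) (d : ℕ) :
    ((y : ℂ)) ^ ((d : ℂ) / 2) = ((√y ^ d : ℝ) : ℂ) := by
  have h : ((d : ℂ) / 2) = (((d : ℝ) / 2 : ℝ) : ℂ) := by push_cast; rfl
  rw [h, ← Complex.ofReal_cpow hy, Real.sqrt_eq_rpow, ← Real.rpow_natCast, ← Real.rpow_mul hy]
  congr 2; ring

lemma heat_fourier_integrand (d : ℕ) (t : ℝ) (x ξ : Vd d) :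
    Complex.exp (-Complex.I * (∑ i, (x i : ℂ) * (ξ i : ℂ))) * (heat d t x : ℂ) =
      (((√(4 * Real.pi * t)) ^ d : ℝ) : ℂ)⁻¹ *
        Complex.exp (-((1 / (4 * t) : ℝ) : ℂ) * ∑ i, (x i : ℂ) ^ 2 +
          ∑ i, (-Complex.I * ξ i) * (x i : ℂ)) := by
  unfold heat
  rw [Complex.exp_add]
  have : ∑ i, (-Complex.I * ξ i) * (x i : ℂ) = -Complex.I * (∑ i, (x i : ℂ) * (ξ i : ℂ)) := by
    rw [Finset.mul_sum]; exact Finset.sum_congr rfl fun i _ => by ring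
  rw [this]
  push_cast
  ring

lemma heat_integrable_mul (d : ℕ) {t : ℝ} (ht : 0 < t) (ξ : Vd d) :
    Integrable fun x : Vd d =>
      Complex.exp (-Complex.I * (∑ i, (x i : ℂ) * (ξ i : ℂ))) * (heat d t x : ℂ) := by
  simp_rw [heat_fourier_integrand]
  refine (GaussianFourier.integrable_cexp_neg_mul_sum_add ?_ _).const_mul _
  rw [Complex.ofReal_re]; positivity

lemma ft_heat (d : ℕ) {t : ℝ} (ht : 0 < t) (ξ : Vd d) :
    ft d (heat d t) ξ = (Real.exp (-(t * ∑ i, ξ i ^ 2)) : ℂ) := by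
  unfold ft
  simp_rw [heat_fourier_integrand]
  have hb : 0 < ((1 / (4 * t) : ℝ) : ℂ).re := by rw [Complex.ofReal_re]; positivity
  rw [integral_const_mul, GaussianFourier.integral_cexp_neg_mul_sum_add hb, Fintype.card_fin]
  have h1 : (Real.pi : ℂ) / ((1 / (4 * t) : ℝ) : ℂ) = ((4 * Real.pi * t : ℝ) : ℂ) := by
    push_cast; field_simp
  have hne : (((√(4 * Real.pi * t)) ^ d : ℝ) : ℂ) ≠ 0 := by
    have : 0 < (√(4 * Real.pi * t)) ^ d := by positivity
    exact_mod_cast this.ne'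
  rw [h1, ofReal_cpow_half _ (by positivity), ← mul_assoc, inv_mul_cancel₀ hne, one_mul,
    Complex.ofReal_exp]
  congr 1
  have h2 : ∀ i, (-Complex.I * (ξ i : ℂ)) ^ 2 = -(ξ i : ℂ) ^ 2 := fun i => by
    rw [mul_pow, neg_sq, Complex.I_sq]; ring
  simp_rw [h2, Finset.sum_neg_distrib]
  have ht' : (t : ℂ) ≠ 0 := by exact_mod_cast ht.ne'
  push_cast
  field_simp

lemma heat_integrable (d : ℕ) {t : ℝ} (ht : 0 < t) : Integrable (heat d t) := by
  have := heat_integrable_mul d ht 0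
  simp only [Pi.zero_apply, Complex.ofReal_zero, mul_zero, Finset.sum_const_zero, Complex.exp_zero,
    one_mul] at this
  simpa using this.re

lemma heat_integral (d : ℕ) {t : ℝ} (ht : 0 < t) : ∫ x, heat d t x = 1 := by
  have := ft_heat d ht 0
  unfold ft at this
  simp only [Pi.zero_apply, Complex.ofReal_zero, mul_zero, Finset.sum_const_zero, Complex.exp_zero,
    one_mul, integral_complex_ofReal] at this
  have h : (∫ x, heat d t x) = Real.exp (-(t * ∑ i : Fin d, (0:ℝ) ^ 2)) := by exact_mod_cast this
  simpa using h

/-! ### The Bessel kernel as a mixture of heat kernels -/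

/-- The integrand, as a function of the mixing variable `s`, of the `Gamma(d+2)` mixture of heat
kernels representing the Bessel kernel. -/
def mixInt (d : ℕ) (l : ℝ) (s : ℝ) (x : Vd d) : ℝ :=
  ((d + 1).factorial : ℝ)⁻¹ * (s ^ (d + 1) * Real.exp (-s)) * heat d (s * l ^ 2) x

/-- The Bessel kernel with symbol `(1 + l² |ξ|²)^{-(d+2)}`, written as a Gamma mixture of heat
kernels at times `s l²`. -/
def bessel (d : ℕ) (l : ℝ) (x : Vd d) : ℝ := ∫ s in Set.Ioi (0 : ℝ), mixInt d l s x

lemma mixInt_nonneg (d : ℕ) (l : ℝ) {s : ℝ} (hs : 0 < s) (x : Vd d) : 0 ≤ mixInt d l s x := by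
  unfold mixInt; have := heat_nonneg d (s * l ^ 2) x; positivity

lemma bessel_nonneg (d : ℕ) (l : ℝ) (x : Vd d) : 0 ≤ bessel d l x :=
  setIntegral_nonneg measurableSet_Ioi fun _ hs => mixInt_nonneg d l hs x

lemma mixInt_measurable (d : ℕ) (l : ℝ) :
    Measurable fun p : ℝ × Vd d => mixInt d l p.1 p.2 := by
  unfold mixInt heat
  fun_prop

lemma gamma_integral (d : ℕ) {r : ℝ} (hr : 0 < r) :
    ∫ s in Set.Ioi (0 : ℝ), s ^ (d + 1) * Real.exp (-(r * s)) =
      (r ^ (d + 2))⁻¹ * (d + 1).factorial := by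
  have h := Real.integral_rpow_mul_exp_neg_mul_Ioi (a := (d : ℝ) + 2) (r := r) (by positivity) hr
  have h1 : ((d : ℝ) + 2) - 1 = ((d + 1 : ℕ) : ℝ) := by push_cast; ring
  have h2 : Real.Gamma ((d : ℝ) + 2) = (d + 1).factorial := by
    rw [← Real.Gamma_nat_eq_factorial]; congr 1; push_cast; ring
  have h3 : (1 / r) ^ ((d : ℝ) + 2) = (r ^ (d + 2))⁻¹ := by
    rw [show (d : ℝ) + 2 = ((d + 2 : ℕ) : ℝ) by push_cast; ring, Real.rpow_natCast]
    simp
  rw [h2, h3, h1] at h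
  simpa only [Real.rpow_natCast] using h

lemma gamma_integrable (d : ℕ) :
    IntegrableOn (fun s : ℝ => s ^ (d + 1) * Real.exp (-s)) (Set.Ioi 0) := by
  have h := Real.GammaIntegral_convergent (s := (d : ℝ) + 2) (by positivity)
  have h1 : ((d : ℝ) + 2) - 1 = ((d + 1 : ℕ) : ℝ) := by push_cast; ring
  rw [h1] at h
  simpa only [Real.rpow_natCast, mul_comm] using h

lemma mixInt_integrable (d : ℕ) {l : ℝ} (hl : 0 < l) :
    Integrable (fun p : ℝ × Vd d => mixInt d l p.1 p.2)
      ((volume.restrict (Set.Ioi (0 : ℝ))).prod volume) := by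
  rw [integrable_prod_iff (mixInt_measurable d l).aestronglyMeasurable]
  refine ⟨?_, ?_⟩
  · filter_upwards [ae_restrict_mem measurableSet_Ioi] with s hs
    exact (heat_integrable d (mul_pos hs (pow_pos hl 2))).const_mul _
  · refine ((gamma_integrable d).const_mul ((d + 1).factorial : ℝ)⁻¹).congr ?_
    filter_upwards [ae_restrict_mem measurableSet_Ioi] with s hs
    have : ∀ x, ‖mixInt d l s x‖ = mixInt d l s x := fun x => by
      rw [Real.norm_eq_abs, abs_of_nonneg (mixInt_nonneg d l hs x)]
    simp_rw [this]
    unfold mixInt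
    rw [integral_const_mul, heat_integral d (mul_pos hs (pow_pos hl 2)), mul_one]

lemma bessel_integrable (d : ℕ) {l : ℝ} (hl : 0 < l) : Integrable (bessel d l) :=
  (mixInt_integrable d hl).integral_prod_right

/-- Fubini reduces the Fourier transform of the mixture to that of the heat kernels, and leaves
a Gamma integral. -/
lemma ft_bessel (d : ℕ) {l : ℝ} (hl : 0 < l) (ξ : Vd d) :
    ft d (bessel d l) ξ = (((1 + l ^ 2 * ∑ i, ξ i ^ 2) ^ (d + 2) : ℝ) : ℂ)⁻¹ := by
  unfold ft bessel
  have hnorm : ∀ x : Vd d, ‖Complex.exp (-Complex.I * (∑ i, (x i : ℂ) * (ξ i : ℂ)))‖ = 1 := by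
    intro x
    have : -Complex.I * (∑ i, (x i : ℂ) * (ξ i : ℂ)) =
        ((-∑ i, x i * ξ i : ℝ) : ℂ) * Complex.I := by push_cast; ring
    rw [this, Complex.norm_exp_ofReal_mul_I]
  have hint : Integrable (Function.uncurry fun (x : Vd d) (s : ℝ) =>
      Complex.exp (-Complex.I * (∑ i, (x i : ℂ) * (ξ i : ℂ))) * (mixInt d l s x : ℂ))
      (volume.prod (volume.restrict (Set.Ioi (0 : ℝ)))) := by
    refine Integrable.bdd_mul (c := 1) (mixInt_integrable d hl).swap.ofReal ?_ ?_
    · exact Measurable.aestronglyMeasurable (by fun_prop)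
    · exact Filter.Eventually.of_forall fun p => (hnorm p.1).le
  have h1 : ∀ x : Vd d, Complex.exp (-Complex.I * (∑ i, (x i : ℂ) * (ξ i : ℂ))) *
      ((∫ s in Set.Ioi (0 : ℝ), mixInt d l s x : ℝ) : ℂ) =
      ∫ s in Set.Ioi (0 : ℝ),
        Complex.exp (-Complex.I * (∑ i, (x i : ℂ) * (ξ i : ℂ))) * (mixInt d l s x : ℂ) := by
    intro x
    rw [integral_const_mul, integral_complex_ofReal]
  simp_rw [h1]
  rw [integral_integral_swap hint]
  have hr : 0 < 1 + l ^ 2 * ∑ i, ξ i ^ 2 := by positivity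
  have h2 : ∀ s ∈ Set.Ioi (0 : ℝ), (∫ x : Vd d,
      Complex.exp (-Complex.I * (∑ i, (x i : ℂ) * (ξ i : ℂ))) * (mixInt d l s x : ℂ)) =
      ((((d + 1).factorial : ℝ)⁻¹ *
        (s ^ (d + 1) * Real.exp (-((1 + l ^ 2 * ∑ i, ξ i ^ 2) * s))) : ℝ) : ℂ) := by
    intro s hs
    have h3 := ft_heat d (mul_pos (Set.mem_Ioi.1 hs) (pow_pos hl 2)) ξ
    unfold ft at h3
    have h4 : ∀ x : Vd d,
        Complex.exp (-Complex.I * (∑ i, (x i : ℂ) * (ξ i : ℂ))) * (mixInt d l s x : ℂ) =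
        ((((d + 1).factorial : ℝ)⁻¹ * (s ^ (d + 1) * Real.exp (-s)) : ℝ) : ℂ) *
        (Complex.exp (-Complex.I * (∑ i, (x i : ℂ) * (ξ i : ℂ))) *
          (heat d (s * l ^ 2) x : ℂ)) := by
      intro x; unfold mixInt; push_cast; ring
    simp_rw [h4]
    rw [integral_const_mul, h3, ← Complex.ofReal_mul, mul_assoc, mul_assoc, ← Real.exp_add]
    congr 5
    ring
  rw [setIntegral_congr_fun measurableSet_Ioi h2, integral_complex_ofReal, integral_const_mul,
    gamma_integral d hr, ← Complex.ofReal_inv]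
  congr 1
  field_simp

/-! ### Pointwise decay -/

/-- An integrable product weight dominating the Bessel kernels. -/
def wt (d : ℕ) (x : Vd d) : ℝ := ∏ i, (1 + x i ^ 2)⁻¹

/-- The time `s l²` enters the exponential only through `l ≤ 1`, so the whole blow-up as `l → 0` is
the normalizing factor `l^{-d}`. -/
lemma heat_le (d : ℕ) {l s : ℝ} (hl : 0 < l) (hl1 : l ≤ 1) (hs : 0 < s) (x : Vd d) :
    s ^ (d + 1) * heat d (s * l ^ 2) x ≤ (l ^ d)⁻¹ * wt d x * (4 ^ d * (1 + s) ^ (2 * d + 1)) := by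
  have hexp : Real.exp (-(1 / (4 * (s * l ^ 2))) * ∑ i, x i ^ 2) ≤ (4 * (1 + s)) ^ d * wt d x := by
    rw [Finset.mul_sum, Real.exp_sum]
    have : (4 * (1 + s)) ^ d * wt d x = ∏ i : Fin d, (4 * (1 + s)) * (1 + x i ^ 2)⁻¹ := by
      rw [Finset.prod_mul_distrib, Finset.prod_const, Finset.card_univ, Fintype.card_fin]; rfl
    rw [this]
    refine Finset.prod_le_prod (fun _ _ => (Real.exp_pos _).le) fun i _ => ?_
    have h1 : -(1 / (4 * (s * l ^ 2))) * x i ^ 2 ≤ -(x i ^ 2 / (4 * s)) := by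
      rw [neg_mul, neg_le_neg_iff, div_mul_eq_mul_div, one_mul]
      have : l ^ 2 ≤ 1 := pow_le_one₀ hl.le hl1
      refine div_le_div_of_nonneg_left (by positivity) (by positivity) ?_
      nlinarith
    have h2 := Real.add_one_le_exp (x i ^ 2 / (4 * s))
    refine (Real.exp_le_exp.2 h1).trans ?_
    rw [Real.exp_neg, ← div_eq_mul_inv, inv_eq_one_div, div_le_div_iff₀ (Real.exp_pos _)
      (by positivity), one_mul]
    have h3 : 1 + x i ^ 2 ≤ 4 * (1 + s) * (x i ^ 2 / (4 * s) + 1) := by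
      have : 4 * (1 + s) * (x i ^ 2 / (4 * s) + 1) = x i ^ 2 / s + x i ^ 2 + 4 * (1 + s) := by
        field_simp
      rw [this]
      have : 0 ≤ x i ^ 2 / s := by positivity
      linarith
    exact h3.trans (mul_le_mul_of_nonneg_left h2 (by positivity))
  have hsq : s ^ (d + 1) * ((√(4 * Real.pi * (s * l ^ 2))) ^ d)⁻¹ ≤
      (l ^ d)⁻¹ * (1 + s) ^ (d + 1) := by
    have h1 : √(4 * Real.pi * (s * l ^ 2)) = √(4 * Real.pi * s) * l := by
      rw [← mul_assoc, Real.sqrt_mul (by positivity), Real.sqrt_sq hl.le]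
    have h2 : s ≤ (1 + s) * √(4 * Real.pi * s) := by
      have h3 : √s ≤ √(4 * Real.pi * s) := by
        apply Real.sqrt_le_sqrt; nlinarith [Real.pi_gt_three]
      have h4 : √s * √s = s := Real.mul_self_sqrt hs.le
      have h5 : √s ≤ 1 + s := by nlinarith [Real.sqrt_nonneg s, sq_nonneg (√s - 1)]
      calc s = √s * √s := h4.symm
        _ ≤ _ := mul_le_mul h5 h3 (Real.sqrt_nonneg _) (by positivity)
    have h6 : 0 < √(4 * Real.pi * s) := by positivity
    rw [h1, mul_pow, mul_inv, ← mul_assoc, mul_comm, mul_le_mul_iff_right₀ (by positivity)]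
    rw [← div_eq_mul_inv, div_le_iff₀ (by positivity), pow_succ, pow_succ]
    calc s ^ d * s ≤ ((1 + s) * √(4 * Real.pi * s)) ^ d * (1 + s) := by
          gcongr; linarith
      _ = _ := by rw [mul_pow]; ring
  have hw : 0 ≤ wt d x := by unfold wt; positivity
  unfold heat
  calc _ = (s ^ (d + 1) * ((√(4 * Real.pi * (s * l ^ 2))) ^ d)⁻¹) *
        Real.exp (-(1 / (4 * (s * l ^ 2))) * ∑ i, x i ^ 2) := by ring
    _ ≤ ((l ^ d)⁻¹ * (1 + s) ^ (d + 1)) * ((4 * (1 + s)) ^ d * wt d x) :=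
        mul_le_mul hsq hexp (Real.exp_pos _).le (by positivity)
    _ = _ := by rw [mul_pow]; ring

/-- Pointwise decay of the Bessel kernel, with the scaling in `l` made explicit. -/
lemma bessel_le (d : ℕ) : ∃ A : ℝ, 0 < A ∧ ∀ l : ℝ, 0 < l → l ≤ 1 → ∀ x : Vd d,
    bessel d l x ≤ A * (l ^ d)⁻¹ * wt d x := by
  -- `(1 + s)^N ≤ c e^{s/2}`, so the remaining integral in `s` is at most `∫ e^{-s/2} = 2`
  obtain ⟨c, hc, hcs⟩ : ∃ c : ℝ, 0 < c ∧
      ∀ s : ℝ, 0 < s → (4:ℝ) ^ d * (1 + s) ^ (2 * d + 1) ≤ c * Real.exp (s / 2) := by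
    refine ⟨4 ^ d * (2 ^ (2 * d + 1) * (2 * d + 1).factorial * Real.exp (1 / 2)), by positivity,
      fun s hs => ?_⟩
    have h := Real.pow_div_factorial_le_exp ((1 + s) / 2) (by positivity) (2 * d + 1)
    rw [div_le_iff₀ (by positivity), div_pow, div_le_iff₀ (by positivity), add_div,
      Real.exp_add] at h
    calc _ ≤ (4:ℝ) ^ d * _ := mul_le_mul_of_nonneg_left h (by positivity)
      _ = _ := by ring
  have hI : IntegrableOn (fun s : ℝ => Real.exp (-(1 / 2) * s)) (Set.Ioi 0) :=
    exp_neg_integrableOn_Ioi 0 (by norm_num)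
  have hIn : 0 ≤ ∫ s in Set.Ioi (0:ℝ), Real.exp (-(1 / 2) * s) :=
    integral_nonneg fun s => (Real.exp_pos _).le
  refine ⟨c * ((∫ s in Set.Ioi (0:ℝ), Real.exp (-(1 / 2) * s)) + 1), by positivity,
    fun l hl hl1 x => ?_⟩
  have hw : 0 ≤ wt d x := by unfold wt; positivity
  have h : bessel d l x ≤ ∫ s in Set.Ioi (0:ℝ), (l ^ d)⁻¹ * wt d x * c * Real.exp (-(1 / 2) * s) := by
    refine integral_mono_of_nonneg ?_ (hI.const_mul _) ?_
    · filter_upwards [ae_restrict_mem measurableSet_Ioi] with s hs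
      exact mixInt_nonneg d l hs x
    · filter_upwards [ae_restrict_mem measurableSet_Ioi] with s hs
      have hs : 0 < s := hs
      have hf : ((d + 1).factorial : ℝ)⁻¹ ≤ 1 :=
        inv_le_one_of_one_le₀ (by exact_mod_cast Nat.succ_le_of_lt (Nat.factorial_pos _))
      have hh := heat_nonneg d (s * l ^ 2) x
      calc mixInt d l s x = ((d + 1).factorial : ℝ)⁻¹ *
            (Real.exp (-s) * (s ^ (d + 1) * heat d (s * l ^ 2) x)) := by unfold mixInt; ring
        _ ≤ 1 * (Real.exp (-s) * ((l ^ d)⁻¹ * wt d x * (c * Real.exp (s / 2)))) := by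
            refine mul_le_mul hf (mul_le_mul_of_nonneg_left ((heat_le d hl hl1 hs x).trans ?_)
              (Real.exp_pos _).le) (by positivity) zero_le_one
            exact mul_le_mul_of_nonneg_left (hcs s hs) (by positivity)
        _ = (l ^ d)⁻¹ * wt d x * c * (Real.exp (-s) * Real.exp (s / 2)) := by ring
        _ = _ := by rw [← Real.exp_add]; congr 2; ring
  refine h.trans ?_
  rw [integral_const_mul]
  have : 0 ≤ (l ^ d)⁻¹ * wt d x * c := by positivity
  nlinarith

/-! ### Fourier uniqueness -/

/-- Uniqueness of the Fourier transform for nonnegative integrable functions. -/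
lemma ae_eq_of_ft_eq (d : ℕ) (f g : Vd d → ℝ) (hf0 : ∀ x, 0 ≤ f x) (hg0 : ∀ x, 0 ≤ g x)
    (hf : Integrable f) (hg : Integrable g) (h : ∀ ξ, ft d f ξ = ft d g ξ) : f =ᵐ[volume] g := by
  let L : Vd d →ₗ[ℝ] Vd d →ₗ[ℝ] ℝ := dotProductBilin ℝ ℝ
  have hL : Continuous fun p : Vd d × Vd d => L p.1 p.2 := by
    change Continuous fun p : Vd d × Vd d => ∑ i, p.1 i * p.2 i
    fun_prop
  have hL' : ∀ v : Vd d, v ≠ 0 → L v ≠ 0 := by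
    intro v hv h0
    have : v ⬝ᵥ v = 0 := by
      change L v v = 0
      rw [h0]; rfl
    exact hv (dotProduct_self_eq_zero.1 this)
  have key : ∀ (u : Vd d → ℝ), (∀ x, 0 ≤ u x) → Integrable u → ∀ w : Vd d,
      ∫ v, (BoundedContinuousFunction.char Real.continuous_probChar hL w) v
        ∂(volume.withDensity fun x => ENNReal.ofReal (u x)) = ft d u (-w) := by
    intro u hu0 hu w
    rw [integral_withDensity_eq_integral_toReal_smul₀ hu.aemeasurable.ennreal_ofReal
      (Filter.Eventually.of_forall fun x => ENNReal.ofReal_lt_top)]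
    unfold ft
    refine integral_congr_ae (Filter.Eventually.of_forall fun x => ?_)
    simp only [BoundedContinuousFunction.char_apply, ENNReal.toReal_ofReal (hu0 x),
      Real.probChar_apply, Complex.real_smul]
    rw [mul_comm]
    congr 2
    have : L x w = ∑ i, x i * w i := rfl
    rw [this]
    push_cast
    simp [Finset.sum_neg_distrib]
    ring
  have := isFiniteMeasure_withDensity_ofReal hf.2
  have := isFiniteMeasure_withDensity_ofReal hg.2
  have hne : Real.probChar ≠ 1 := Real.probChar_ne_one
  have heq := ext_of_integral_char_eq Real.continuous_probChar hne hL' hL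
    (P := volume.withDensity fun x => ENNReal.ofReal (f x))
    (P' := volume.withDensity fun x => ENNReal.ofReal (g x))
    (fun w => by rw [key f hf0 hf, key g hg0 hg, h])
  rw [withDensity_eq_iff_of_sigmaFinite hf.aemeasurable.ennreal_ofReal
    hg.aemeasurable.ennreal_ofReal] at heq
  filter_upwards [heq] with x hx
  exact (ENNReal.ofReal_eq_ofReal_iff (hf0 x) (hg0 x)).1 hx

/-! ### Periodic functions and the fundamental domain -/

/-- Every translate `a + [-π,π)^d` meets each orbit of the lattice `(2πℤ)^d` exactly once. The
hypothesis `hb` says that `b` is the standard basis scaled by `2π`. -/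
lemma existsUnique_fundDom (d : ℕ) (b : Module.Basis (Fin d) ℝ (Vd d))
    (hb : ∀ x i, b.repr x i = x i / (2 * Real.pi)) (a x : Vd d) :
    ∃! v : Submodule.span ℤ (Set.range b), (v +ᵥ x) - a ∈ fundDom d := by
  have h := ZSpan.exist_unique_vadd_mem_fundamentalDomain b (x - a + fun _ => Real.pi)
  have key : ∀ v : Submodule.span ℤ (Set.range b),
      v +ᵥ (x - a + fun _ => Real.pi) ∈ ZSpan.fundamentalDomain b ↔
        (v +ᵥ x) - a ∈ fundDom d := by
    intro v
    have hpi := Real.pi_pos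
    rw [ZSpan.mem_fundamentalDomain]
    simp only [fundDom, Set.mem_pi, Set.mem_univ, true_imp_iff, hb, Set.mem_Ico,
      Submodule.vadd_def, vadd_eq_add, Pi.add_apply, Pi.sub_apply]
    refine forall_congr' fun i => and_congr ?_ ?_
    · rw [le_div_iff₀ (by positivity)]
      constructor <;> intro h <;> linarith
    · rw [div_lt_one (by positivity)]
      constructor <;> intro h <;> linarith
  simpa only [key] using h

lemma fundDom_measurable (d : ℕ) : MeasurableSet (fundDom d) :=
  MeasurableSet.univ_pi fun _ => measurableSet_Ico

/-- The integral of a `(2πℤ)^d`-periodic function over a translate of the fundamental domain does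
not depend on the translate. -/
lemma lintegral_fundDom_add (d : ℕ) (f : Vd d → ℝ≥0∞)
    (hf : ∀ x i, f (x + Pi.single i (2 * Real.pi)) = f x) (a : Vd d) :
    ∫⁻ v in fundDom d, f (a + v) = ∫⁻ v in fundDom d, f v := by
  have hu : ∀ _ : Fin d, IsUnit (2 * Real.pi) := fun _ => (by positivity : 2 * Real.pi ≠ 0).isUnit
  let b : Module.Basis (Fin d) ℝ (Vd d) := (Pi.basisFun ℝ (Fin d)).isUnitSMul hu
  have hb : ∀ x i, b.repr x i = x i / (2 * Real.pi) := by
    intro x i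
    simp only [b, Module.Basis.repr_isUnitSMul, Pi.basisFun_repr, Units.smul_def, smul_eq_mul,
      Units.val_inv_eq_inv_val, IsUnit.unit_spec]
    rw [div_eq_mul_inv, mul_comm]
  have hbv : ∀ i, b i = Pi.single i (2 * Real.pi) := by
    intro i
    simp [b, Module.Basis.isUnitSMul_apply, ← Pi.single_smul]
  let G := (Submodule.span ℤ (Set.range b))
  have hG : ∀ v ∈ G, ∀ x, f (v + x) = f x := by
    intro v hv
    induction hv using Submodule.span_induction with
    | mem v hv =>
      obtain ⟨i, rfl⟩ := hv
      intro x
      rw [hbv, add_comm, hf]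
    | zero => simp
    | add u v _ _ hu hv => intro x; rw [add_assoc, hu, hv]
    | smul n v _ hv =>
      induction n using Int.induction_on with
      | zero => simp
      | succ n ih => intro x; rw [add_smul, one_smul, add_assoc, ih, hv]
      | pred n ih =>
        intro x
        rw [← hv, ← add_assoc, sub_smul, one_smul, add_sub_cancel, ih]
  have hdom : ∀ a : Vd d, IsAddFundamentalDomain G {v | v - a ∈ fundDom d} volume := fun a =>
    IsAddFundamentalDomain.mk'
      ((measurable_id.sub_const a) (fundDom_measurable d)).nullMeasurableSet
      (existsUnique_fundDom d b hb a)
  have hinv : VAddInvariantMeasure G (Vd d) volume :=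
    ⟨fun c s _ => measure_preimage_add volume (c : Vd d) s⟩
  have h0 := (hdom a).setLIntegral_eq (hdom 0) f fun g x => hG g g.2 x
  simp only [sub_zero, Set.ofPred_mem_eq] at h0
  have hS : MeasurableSet {v : Vd d | v - a ∈ fundDom d} :=
    (measurable_id.sub_const a) (fundDom_measurable d)
  rw [← h0, ← lintegral_indicator (fundDom_measurable d), ← lintegral_indicator hS,
    ← lintegral_add_left_eq_self ({v : Vd d | v - a ∈ fundDom d}.indicator f) a]
  refine lintegral_congr fun v => ?_
  by_cases hv : v ∈ fundDom d
  · rw [Set.indicator_of_mem hv, Set.indicator_of_mem]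
    rwa [Set.mem_ofPred_eq, add_sub_cancel_left]
  · rw [Set.indicator_of_notMem hv, Set.indicator_of_notMem]
    rwa [Set.mem_ofPred_eq, add_sub_cancel_left]

lemma wt_nonneg (d : ℕ) (x : Vd d) : 0 ≤ wt d x := by unfold wt; positivity

lemma wt_le_one (d : ℕ) (x : Vd d) : wt d x ≤ 1 :=
  Finset.prod_le_one (fun _ _ => by positivity) fun i _ =>
    inv_le_one_of_one_le₀ (by nlinarith [sq_nonneg (x i)])

lemma wt_measurable (d : ℕ) : Measurable (wt d) := by unfold wt; fun_prop

lemma wt_integrable (d : ℕ) : Integrable (wt d) :=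
  Integrable.fintype_prod (f := fun (_ : Fin d) (t : ℝ) => (1 + t ^ 2)⁻¹)
    fun _ => integrable_inv_one_add_sq

/-- The weight is slowly varying: it is comparable to its translates by elements of the
fundamental domain. -/
lemma wt_le_translate (d : ℕ) (x v : Vd d) (hv : v ∈ fundDom d) :
    wt d x ≤ (2 + 2 * Real.pi ^ 2) ^ d * wt d (x + v) := by
  have : (2 + 2 * Real.pi ^ 2) ^ d * wt d (x + v) =
      ∏ i : Fin d, (2 + 2 * Real.pi ^ 2) * (1 + (x + v) i ^ 2)⁻¹ := by
    rw [Finset.prod_mul_distrib, Finset.prod_const, Finset.card_univ, Fintype.card_fin]; rfl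
  rw [this]
  refine Finset.prod_le_prod (fun _ _ => by positivity) fun i _ => ?_
  obtain ⟨h1, h2⟩ := hv i trivial
  have h3 : v i ^ 2 ≤ Real.pi ^ 2 := sq_le_sq' h1 h2.le
  rw [← div_eq_mul_inv, inv_eq_one_div, div_le_div_iff₀ (by positivity) (by positivity),
    Pi.add_apply]
  nlinarith [sq_nonneg (x i - v i), mul_nonneg (sq_nonneg Real.pi) (sq_nonneg (x i))]

lemma fundDom_volume (d : ℕ) : volume (fundDom d) ≠ 0 ∧ volume (fundDom d) ≠ ⊤ := by
  have : volume (fundDom d) = ENNReal.ofReal (2 * Real.pi) ^ d := by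
    unfold fundDom
    rw [volume_pi_pi]
    simp [Real.volume_Ico, two_mul]
  have h : ENNReal.ofReal (2 * Real.pi) ≠ 0 := by
    rw [Ne, ENNReal.ofReal_eq_zero, not_le]; positivity
  rw [this]
  exact ⟨pow_ne_zero _ h, ENNReal.pow_ne_top ENNReal.ofReal_ne_top⟩

/-- Convolving a periodic function with the weight is controlled by its integral over one period:
averaging over translates by the fundamental domain replaces the function by its mean. -/
lemma weighted_periodic (d : ℕ) : ∃ C : ℝ≥0∞, C ≠ ⊤ ∧ ∀ f : Vd d → ℝ≥0∞, Measurable f →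
    (∀ x i, f (x + Pi.single i (2 * Real.pi)) = f x) → ∀ x : Vd d,
    ∫⁻ y, ENNReal.ofReal (wt d (x - y)) * f y ≤ C * ∫⁻ y in fundDom d, f y := by
  obtain ⟨hV0, hVt⟩ := fundDom_volume d
  set c : ℝ := (2 + 2 * Real.pi ^ 2) ^ d with hc
  have hc0 : 0 ≤ c := by positivity
  set J := ∫⁻ y, ENNReal.ofReal (wt d y) with hJ
  have hJt : J ≠ ⊤ := (wt_integrable d).lintegral_lt_top.ne
  refine ⟨(volume (fundDom d))⁻¹ * (ENNReal.ofReal c * J), ?_, ?_⟩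
  · exact ENNReal.mul_ne_top (ENNReal.inv_ne_top.2 hV0)
      (ENNReal.mul_ne_top ENNReal.ofReal_ne_top hJt)
  intro f hfm hf x
  have hwm := wt_measurable d
  rw [mul_assoc, ← ENNReal.mul_le_iff_le_inv hV0 hVt]
  calc volume (fundDom d) * ∫⁻ y, ENNReal.ofReal (wt d (x - y)) * f y
      = ∫⁻ _ in fundDom d, ∫⁻ y, ENNReal.ofReal (wt d (x - y)) * f y := by
        rw [setLIntegral_const, mul_comm]
    _ ≤ ∫⁻ v in fundDom d, ENNReal.ofReal c *
          ∫⁻ y, ENNReal.ofReal (wt d (x - y + v)) * f y := by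
        refine setLIntegral_mono' (fundDom_measurable d) fun v hv => ?_
        rw [← lintegral_const_mul' _ _ ENNReal.ofReal_ne_top]
        refine lintegral_mono fun y => ?_
        rw [← mul_assoc, ← ENNReal.ofReal_mul hc0]
        gcongr
        exact wt_le_translate d _ _ hv
    _ = ENNReal.ofReal c * ∫⁻ v in fundDom d, ∫⁻ u, ENNReal.ofReal (wt d (x - u)) * f (u + v) := by
        rw [lintegral_const_mul' _ _ ENNReal.ofReal_ne_top]
        congr 1
        refine lintegral_congr fun v => ?_
        rw [← lintegral_add_right_eq_self _ v]
        refine lintegral_congr fun u => ?_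
        congr 3
        abel
    _ = ENNReal.ofReal c * ∫⁻ u, ENNReal.ofReal (wt d (x - u)) * ∫⁻ v in fundDom d, f (u + v) := by
        rw [lintegral_lintegral_swap]
        · congr 1
          refine lintegral_congr fun u => ?_
          rw [lintegral_const_mul' _ _ ENNReal.ofReal_ne_top]
        · exact Measurable.aemeasurable (by fun_prop)
    _ = ENNReal.ofReal c * J * ∫⁻ y in fundDom d, f y := by
        simp_rw [lintegral_fundDom_add d f hf]
        rw [lintegral_mul_const _ (by fun_prop),
          lintegral_sub_left_eq_self (fun y => ENNReal.ofReal (wt d y)), mul_assoc]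

/-! ### The tensor kernel and the pointwise bound -/

/-- The tensor kernel `K^{⊗(1+m)}`. -/
def tens (d m : ℕ) (K : Vd d → ℝ) (p : Vd d × (Fin m → Vd d)) : ℝ := K p.1 * ∏ j, K (p.2 j)

lemma sub_left_preserving (d m : ℕ) (q : Vd d × (Fin m → Vd d)) :
    MeasurePreserving (fun p : Vd d × (Fin m → Vd d) => q - p) := by
  have h1 : MeasurePreserving (fun x : Vd d => q.1 - x) := Measure.measurePreserving_sub_left volume q.1
  have h2 : MeasurePreserving (fun (y : Fin m → Vd d) j => q.2 j - y j) :=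
    volume_preserving_pi fun j => Measure.measurePreserving_sub_left volume (q.2 j)
  exact h1.prod h2

lemma tens_integrable (d m : ℕ) {K : Vd d → ℝ} (hK : Integrable K) : Integrable (tens d m K) :=
  hK.mul_prod (g := fun y : Fin m → Vd d => ∏ j, K (y j))
    (Integrable.fintype_prod (f := fun _ => K) fun _ => hK)

lemma tens_integral (d m : ℕ) {K : Vd d → ℝ} (hK : ∫ x, K x = 1) : ∫ p, tens d m K p = 1 := by
  have h : ∫ y : Fin m → Vd d, ∏ j, K (y j) = 1 := by
    have := integral_fintype_prod_eq_prod (𝕜 := ℝ) (fun _ : Fin m => K) (μ := fun _ => volume)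
    rw [volume_pi, this]; simp [hK]
  have := integral_prod_mul (L := ℝ) (μ := volume) (ν := volume) K
    (fun y : Fin m → Vd d => ∏ j, K (y j))
  rw [h, hK, mul_one] at this
  exact this

/-- Only the decay in the first variable is kept; in the others the weight is bounded by `1`. -/
lemma tens_le (d m : ℕ) {K : Vd d → ℝ} (hK0 : ∀ x, 0 ≤ K x) {B : ℝ} (hB : 0 ≤ B)
    (hKB : ∀ᵐ x, K x ≤ B * wt d x) : ∀ᵐ p, tens d m K p ≤ B ^ (1 + m) * wt d p.1 := by
  have h1 : ∀ᵐ p : Vd d × (Fin m → Vd d), K p.1 ≤ B * wt d p.1 :=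
    Measure.quasiMeasurePreserving_fst.ae hKB
  have h2 : ∀ᵐ p : Vd d × (Fin m → Vd d), ∀ j, K (p.2 j) ≤ B * wt d (p.2 j) :=
    Measure.quasiMeasurePreserving_snd.ae (ae_all_iff.2 fun j =>
      (Measure.quasiMeasurePreserving_eval (fun _ : Fin m => (volume : Measure (Vd d))) j).ae hKB)
  filter_upwards [h1, h2] with p hp1 hp2
  have h3 : ∏ j, K (p.2 j) ≤ B ^ m := by
    calc ∏ j, K (p.2 j) ≤ ∏ _j : Fin m, B := Finset.prod_le_prod (fun j _ => hK0 _) fun j _ =>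
          (hp2 j).trans (mul_le_of_le_one_right hB (wt_le_one d _))
      _ = B ^ m := by simp
  calc tens d m K p ≤ (B * wt d p.1) * B ^ m :=
        mul_le_mul hp1 h3 (Finset.prod_nonneg fun j _ => hK0 _) (mul_nonneg hB (wt_nonneg d _))
    _ = _ := by ring

/-- Jensen's inequality for a nonnegative density of total mass one. -/
lemma jensen {α : Type*} [MeasurableSpace α] {ν : Measure α} {h : α → ℝ} (hi : Integrable h ν)
    (h0 : ∀ x, 0 ≤ h x) (h1 : ∫ x, h x ∂ν = 1) {g : α → ℝ} (hg : Measurable g) {n : ℕ}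
    (hn : 0 < n) :
    ‖∫ x, h x * g x ∂ν‖ₑ ^ n ≤ ∫⁻ x, ENNReal.ofReal (h x) * ‖g x‖ₑ ^ n ∂ν := by
  have hm : AEMeasurable (fun x => ENNReal.ofReal (h x)) ν := hi.aemeasurable.ennreal_ofReal
  set P := ν.withDensity fun x => ENNReal.ofReal (h x) with hP
  have hprob : IsProbabilityMeasure P := ⟨by
    rw [hP, withDensity_apply _ MeasurableSet.univ, Measure.restrict_univ,
      ← ofReal_integral_eq_lintegral_ofReal hi (Filter.Eventually.of_forall h0), h1,
      ENNReal.ofReal_one]⟩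
  have e1 : ‖∫ x, h x * g x ∂ν‖ₑ ≤ eLpNorm g 1 P := by
    rw [eLpNorm_one_eq_lintegral_enorm, hP,
      lintegral_withDensity_eq_lintegral_mul₀ hm hg.enorm.aemeasurable]
    refine (enorm_integral_le_lintegral_enorm _).trans (lintegral_mono fun x => ?_)
    rw [enorm_mul, Real.enorm_of_nonneg (h0 x)]
    rfl
  have e2 : eLpNorm g 1 P ≤ eLpNorm g n P :=
    eLpNorm_le_eLpNorm_of_exponent_le (by exact_mod_cast hn) hg.aestronglyMeasurable
  have e3 : eLpNorm g n P ^ n = ∫⁻ x, ‖g x‖ₑ ^ n ∂P := by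
    have := eLpNorm_nnreal_pow_eq_lintegral (f := g) (μ := P) (p := (n : NNReal))
      (by exact_mod_cast hn.ne')
    simpa using this
  calc _ ≤ eLpNorm g n P ^ n := pow_le_pow_left' (e1.trans e2) n
    _ = _ := by
      rw [e3, hP, lintegral_withDensity_eq_lintegral_mul₀ hm (hg.enorm.pow_const n).aemeasurable]
      rfl

/-- The pointwise form of the moment bound, for a deterministic field. -/
lemma conv_bound (d m : ℕ) : ∃ C : ℝ≥0∞, C ≠ ⊤ ∧ ∀ (n : ℕ), 0 < n → ∀ (K : Vd d → ℝ) (B : ℝ),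
    0 ≤ B → (∀ x, 0 ≤ K x) → Integrable K → ∫ x, K x = 1 → (∀ᵐ x, K x ≤ B * wt d x) →
    ∀ g : Vd d → (Fin m → Vd d) → ℝ, Measurable (fun p : Vd d × (Fin m → Vd d) => g p.1 p.2) →
    (∀ x y i, g (x + Pi.single i (2 * Real.pi)) y = g x y) → ∀ q,
    ‖convField d m K g q‖ₑ ^ n ≤ ENNReal.ofReal (B ^ (1 + m)) * C *
      ∫⁻ p in (fundDom d) ×ˢ Set.univ, ‖g p.1 p.2‖ₑ ^ n := by
  obtain ⟨C, hC, hCw⟩ := weighted_periodic d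
  refine ⟨C, hC, fun n hn K B hB hK0 hKi hK1 hKB g hgm hg q => ?_⟩
  have hpres := sub_left_preserving d m q
  have hi : Integrable fun p => tens d m K (q - p) :=
    hpres.integrable_comp_of_integrable (tens_integrable d m hKi)
  have hemb : MeasurableEmbedding (fun p : Vd d × (Fin m → Vd d) => q - p) :=
    (MeasurableEquiv.subLeft q).measurableEmbedding
  have h1 : ∫ p, tens d m K (q - p) = 1 := by
    rw [hpres.integral_comp hemb, tens_integral d m hK1]
  have hJ := jensen hi (fun p => mul_nonneg (hK0 _) (Finset.prod_nonneg fun j _ => hK0 _)) h1 hgm hn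
  have hle := hpres.quasiMeasurePreserving.ae (tens_le d m hK0 hB hKB)
  have hm2 : Measurable fun p : Vd d × (Fin m → Vd d) => ‖g p.1 p.2‖ₑ ^ n :=
    hgm.enorm.pow_const n
  let F : Vd d → ℝ≥0∞ := fun x => ∫⁻ y, ‖g x y‖ₑ ^ n
  have hF : Measurable F :=
    Measurable.lintegral_prod_right' (f := fun p : Vd d × (Fin m → Vd d) => ‖g p.1 p.2‖ₑ ^ n) hm2
  have hm3 : Measurable fun x : Vd d => ENNReal.ofReal (wt d (q.1 - x)) :=
    ((wt_measurable d).comp (measurable_const.sub measurable_id)).ennreal_ofReal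
  have hm4 : Measurable fun p : Vd d × (Fin m → Vd d) =>
      ENNReal.ofReal (wt d (q.1 - p.1)) * ‖g p.1 p.2‖ₑ ^ n :=
    (hm3.comp measurable_fst).mul hm2
  calc ‖convField d m K g q‖ₑ ^ n
      ≤ ∫⁻ p, ENNReal.ofReal (tens d m K (q - p)) * ‖g p.1 p.2‖ₑ ^ n := hJ
    _ ≤ ∫⁻ p : Vd d × (Fin m → Vd d), ENNReal.ofReal (B ^ (1 + m)) *
          (ENNReal.ofReal (wt d (q.1 - p.1)) * ‖g p.1 p.2‖ₑ ^ n) := by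
        refine lintegral_mono_ae ?_
        filter_upwards [hle] with p hp
        rw [← mul_assoc, ← ENNReal.ofReal_mul (by positivity)]
        gcongr
        exact hp
    _ = ENNReal.ofReal (B ^ (1 + m)) * ∫⁻ x, ENNReal.ofReal (wt d (q.1 - x)) *
          ∫⁻ y, ‖g x y‖ₑ ^ n := by
        rw [lintegral_const_mul' _ _ ENNReal.ofReal_ne_top, Measure.volume_eq_prod,
          lintegral_prod _ hm4.aemeasurable]
        congr 1
        refine lintegral_congr fun x => ?_
        exact lintegral_const_mul' (ENNReal.ofReal (wt d (q.1 - x))) (fun y => ‖g x y‖ₑ ^ n)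
          ENNReal.ofReal_ne_top
    _ ≤ ENNReal.ofReal (B ^ (1 + m)) * (C * ∫⁻ x in fundDom d, ∫⁻ y, ‖g x y‖ₑ ^ n) := by
        exact mul_le_mul_right (hCw F hF (fun x i => by simp_rw [F, hg]) q.1) _
    _ = _ := by
        rw [Measure.volume_eq_prod, ← Measure.prod_restrict, Measure.restrict_univ,
          lintegral_prod _ hm2.aemeasurable, mul_assoc]

/-- Kolmogorov-type moment bound via Young's inequality:
`𝔼‖K̃_μ^{⊗(1+m)}∗ζ‖_{L^∞}^n ≤ C·[μ]^{-d(1+m)}·𝔼‖ζ‖_{L^n(𝕋×(ℝ^d)^m)}^n` for every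
jointly measurable bounded random field `ζ` which is `2π`-periodic in its first variable. -/
theorem stmt13 (d : ℕ) (hd : 0 < d) (σ : ℝ) (hσ : 0 < σ)
    (n : ℕ) (hn : 0 < n) (hne : Even n) (m : ℕ)
    (K : ℝ → Vd d → ℝ) (hK : IsBessel d σ K) :
    ∃ C : ℝ, 0 < C ∧
      ∀ (Ω : Type) (_ : MeasureSpace Ω), IsProbabilityMeasure (volume : Measure Ω) →
      ∀ ζ : Ω → Vd d → (Fin m → Vd d) → ℝ,
        Measurable (fun q : Ω × (Vd d × (Fin m → Vd d)) => ζ q.1 q.2.1 q.2.2) →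
        (∃ M : ℝ, ∀ ω x y, |ζ ω x y| ≤ M) →
        (∀ ω x y (i : Fin d), ζ ω (x + Pi.single i (2 * Real.pi)) y = ζ ω x y) →
        ∀ μ ∈ Set.Ioc (0 : ℝ) 1,
          (∫⁻ ω, (eLpNorm (convField d m (K μ) (ζ ω)) ⊤ volume) ^ n)
            ≤ ENNReal.ofReal (C * (μ ^ (1 / σ)) ^ (-((d : ℝ) * (1 + m)))) *
              ∫⁻ ω, (eLpNorm (fun q : Vd d × (Fin m → Vd d) => ζ ω q.1 q.2) n
                        (volume.restrict ((fundDom d) ×ˢ Set.univ))) ^ n := by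
  obtain ⟨A, hA, hAb⟩ := bessel_le d
  obtain ⟨C, hC, hCb⟩ := conv_bound d m
  refine ⟨A ^ (1 + m) * (C.toReal + 1), by positivity, ?_⟩
  intro Ω _ _ ζ hζm _ hζp μ hμ
  obtain ⟨hK0, hKi, hK1, hKft⟩ := hK μ hμ
  set l := μ ^ (1 / σ) with hl
  have hl0 : 0 < l := Real.rpow_pos_of_pos hμ.1 _
  have hl1 : l ≤ 1 := Real.rpow_le_one hμ.1.le hμ.2 (by positivity)
  have hKB : ∀ᵐ x, K μ x ≤ A * (l ^ d)⁻¹ * wt d x := by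
    filter_upwards [ae_eq_of_ft_eq d (K μ) (bessel d l) hK0 (bessel_nonneg d l) hKi
      (bessel_integrable d hl0) fun ξ => by rw [hKft, ft_bessel d hl0]] with x hx
    rw [hx]
    exact hAb l hl0 hl1 x
  have hconst : ENNReal.ofReal ((A * (l ^ d)⁻¹) ^ (1 + m)) * C ≤
      ENNReal.ofReal (A ^ (1 + m) * (C.toReal + 1) * l ^ (-((d : ℝ) * (1 + m)))) := by
    have h1 : l ^ (-((d : ℝ) * (1 + m))) = ((l ^ d)⁻¹) ^ (1 + m) := by
      rw [Real.rpow_neg hl0.le, show (d : ℝ) * (1 + m) = ((d * (1 + m) : ℕ) : ℝ) by push_cast; ring,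
        Real.rpow_natCast, pow_mul, inv_pow]
    rw [h1, ← ENNReal.ofReal_toReal hC, ← ENNReal.ofReal_mul (by positivity),
      ENNReal.toReal_ofReal ENNReal.toReal_nonneg]
    refine ENNReal.ofReal_le_ofReal ?_
    have h2 : 0 ≤ A ^ (1 + m) * ((l ^ d)⁻¹) ^ (1 + m) := by positivity
    rw [mul_pow]
    nlinarith
  rw [← lintegral_const_mul' _ _ ENNReal.ofReal_ne_top]
  refine lintegral_mono fun ω => ?_
  have hb := hCb n hn (K μ) (A * (l ^ d)⁻¹) (by positivity) hK0 hKi hK1 hKB (ζ ω)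
    (hζm.comp measurable_prodMk_left) (hζp ω)
  have e3 : eLpNorm (fun q : Vd d × (Fin m → Vd d) => ζ ω q.1 q.2) n
      (volume.restrict ((fundDom d) ×ˢ Set.univ)) ^ n =
      ∫⁻ p in (fundDom d) ×ˢ Set.univ, ‖ζ ω p.1 p.2‖ₑ ^ n := by
    have := eLpNorm_nnreal_pow_eq_lintegral
      (f := fun q : Vd d × (Fin m → Vd d) => ζ ω q.1 q.2)
      (μ := volume.restrict ((fundDom d) ×ˢ Set.univ)) (p := (n : NNReal))
      (by exact_mod_cast hn.ne')
    simpa using this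
  rw [e3]
  refine le_trans ?_ (mul_le_mul_left hconst _)
  set R := ENNReal.ofReal ((A * (l ^ d)⁻¹) ^ (1 + m)) * C *
    ∫⁻ p in (fundDom d) ×ˢ Set.univ, ‖ζ ω p.1 p.2‖ₑ ^ n
  -- the pointwise bound holds for every `q`, hence passes to the essential supremum
  have hsup : eLpNorm (convField d m (K μ) (ζ ω)) ⊤ volume ≤ R ^ (n : ℝ)⁻¹ := by
    rw [eLpNorm_exponent_top]
    refine essSup_le_of_ae_le _ (Filter.Eventually.of_forall fun q => ?_)
    have h := ENNReal.rpow_le_rpow (hb q) (by positivity : (0 : ℝ) ≤ (n : ℝ)⁻¹)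
    rwa [ENNReal.pow_rpow_inv_natCast hn.ne'] at h
  calc _ ≤ (R ^ (n : ℝ)⁻¹) ^ n := pow_le_pow_left' hsup n
    _ = R := ENNReal.rpow_inv_natCast_pow hn.ne' R
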